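/- Let G be a C₅-free graph of maximum degree at most d (d ≥ 3), and let M be an induced matching of G that is maximal and stable under the local-search exchange operation. Then |M| ≥ m(G) / ((3/2)d² − d + 1/2). -/

import Mathlib

open Classical

variable {V : Type*}

/-- Two edges (as `Sym2 V`) are in conflict: they are at distance at most 2
in the line graph, i.e. they share a vertex or some edge of `G` joins them. -/
def Conflict (G : SimpleGraph V) (e f : Sym2 V) : Prop :=
  ∃ a ∈ e, ∃ b ∈ f, a = b ∨ G.Adj a b

/-- `C_G(e)`: the set of edges of `G` in conflict with `e` (including `e`). -/
def CSet (G : SimpleGraph V) (e : Sym2 V) : Set (Sym2 V) :=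
  {f | f ∈ G.edgeSet ∧ Conflict G e f}

/-- `PC_G(M, e)`: the private conflict edges of `e` with respect to `M`. -/
def PCSet (G : SimpleGraph V) (M : Set (Sym2 V)) (e : Sym2 V) : Set (Sym2 V) :=
  CSet G e \ ⋃ f ∈ M \ {e}, CSet G f

/-- `M` is an induced matching of `G`. -/
def IsInducedMatching (G : SimpleGraph V) (M : Set (Sym2 V)) : Prop :=
  M ⊆ G.edgeSet ∧ ∀ e ∈ M, ∀ f ∈ M, e ≠ f → ¬ Conflict G e f

/-- `M` is a maximal induced matching of `G`. -/
def IsMaximalInducedMatching (G : SimpleGraph V) (M : Set (Sym2 V)) : Prop :=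
  IsInducedMatching G M ∧ ∀ M', IsInducedMatching G M' → M ⊆ M' → M' = M

/-- `M` is stable under the local-search exchange operation: any two distinct
private conflict edges of an edge of `M` conflict with each other. -/
def LSStable (G : SimpleGraph V) (M : Set (Sym2 V)) : Prop :=
  ∀ e ∈ M, ∀ e' ∈ PCSet G M e, ∀ e'' ∈ PCSet G M e, e' ≠ e'' → e'' ∈ CSet G e'

/-- The edges of `G` with both endpoints in `S`. -/
def edgesWithin (G : SimpleGraph V) (S : Set V) : Set (Sym2 V) :=
  {e | e ∈ G.edgeSet ∧ ∀ a ∈ e, a ∈ S}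

/-- The edges of `G` with one endpoint in `S` and the other in `T`. -/
def edgesBetween (G : SimpleGraph V) (S T : Set V) : Set (Sym2 V) :=
  {e | e ∈ G.edgeSet ∧ ∃ a b : V, e = s(a, b) ∧ a ∈ S ∧ b ∈ T}

/-- `G` has no induced cycle of length 4. -/
def C4Free (G : SimpleGraph V) : Prop :=
  ¬ ∃ a b c d : V, G.Adj a b ∧ G.Adj b c ∧ G.Adj c d ∧ G.Adj d a ∧
      ¬ G.Adj a c ∧ ¬ G.Adj b d ∧ a ≠ c ∧ b ≠ d

/-- `G` has no induced cycle of length 5. -/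
def C5Free (G : SimpleGraph V) : Prop :=
  ¬ ∃ a b c d e : V, G.Adj a b ∧ G.Adj b c ∧ G.Adj c d ∧ G.Adj d e ∧ G.Adj e a ∧
      ¬ G.Adj a c ∧ ¬ G.Adj a d ∧ ¬ G.Adj b d ∧ ¬ G.Adj b e ∧ ¬ G.Adj c e ∧
      a ≠ c ∧ a ≠ d ∧ b ≠ d ∧ b ≠ e ∧ c ≠ e

/-- `G` has no induced `K_{1,3}` (claw). -/
def ClawFree (G : SimpleGraph V) : Prop :=
  ¬ ∃ v a b c : V, G.Adj v a ∧ G.Adj v b ∧ G.Adj v c ∧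
      ¬ G.Adj a b ∧ ¬ G.Adj a c ∧ ¬ G.Adj b c ∧ a ≠ b ∧ a ≠ c ∧ b ≠ c

theorem aux_mem_PC (G : SimpleGraph V) (M : Set (Sym2 V)) (e f : Sym2 V) :
    f ∈ PCSet G M e ↔ f ∈ G.edgeSet ∧ Conflict G e f ∧
      ∀ g ∈ M, g ≠ e → ¬ Conflict G g f := by
  simp only [PCSet, CSet, Set.mem_sdiff, Set.mem_iUnion, Set.mem_ofPred_eq, Set.mem_singleton_iff]
  constructor
  · rintro ⟨⟨h1, h2⟩, h3⟩
    exact ⟨h1, h2, fun g hg hne hc => h3 ⟨g, ⟨hg, hne⟩, h1, hc⟩⟩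
  · rintro ⟨h1, h2, h3⟩
    refine ⟨⟨h1, h2⟩, ?_⟩
    rintro ⟨g, ⟨hg, hne⟩, _, hc⟩
    exact h3 g hg hne hc

theorem aux_symm (G : SimpleGraph V) (e f : Sym2 V) (h : Conflict G e f) : Conflict G f e := by
  obtain ⟨a, ha, b, hb, h⟩ := h
  exact ⟨b, hb, a, ha, h.imp Eq.symm fun h => h.symm⟩

/-- the key structural fact -/
theorem aux_adj (G : SimpleGraph V) (hC5 : C5Free G) (M : Set (Sym2 V))
    (hM : IsInducedMatching G M) (hstab : LSStable G M) (u v : V) (he : s(u, v) ∈ M)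
    (x y x' y' : V) (hux : G.Adj u x) (hvx : ¬ G.Adj v x) (hvx' : G.Adj v x')
    (hux' : ¬ G.Adj u x') (hxv : x ≠ v) (hxu : x' ≠ u)
    (huy : ¬ G.Adj u y) (hvy : ¬ G.Adj v y) (hyu : y ≠ u) (hyv : y ≠ v)
    (hp : s(x, y) ∈ PCSet G M s(u, v)) (hp' : s(x', y') ∈ PCSet G M s(u, v)) :
    G.Adj x x' := by
  have huv : G.Adj u v := hM.1 he
  have hq : s(x', v) ∈ PCSet G M s(u, v) := by
    rw [aux_mem_PC] at hp' ⊢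
    refine ⟨hvx'.symm, ⟨v, by simp, v, by simp, Or.inl rfl⟩, fun g hg hne hc => ?_⟩
    obtain ⟨a, ha, b, hb, h⟩ := hc
    rcases Sym2.mem_iff.1 hb with rfl | rfl
    · exact hp'.2.2 g hg hne ⟨a, ha, b, by simp, h⟩
    · exact hM.2 g hg _ he hne ⟨a, ha, b, by simp, h⟩
  have hxy : G.Adj x y := ((aux_mem_PC _ _ _ _).1 hp).1
  have hxx : x ≠ x' := fun h => hux' (h ▸ hux)
  have hyx : y ≠ x' := fun h => hvy (h ▸ hvx')
  have hne : s(x', v) ≠ s(x, y) := by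
    intro h
    rcases Sym2.eq_iff.1 h with ⟨h1, h2⟩ | ⟨h1, h2⟩
    · exact hxx h1.symm
    · exact hxv h2.symm
  have hc := (hstab _ he _ hq _ hp hne).2
  obtain ⟨a, ha, b, hb, h⟩ := hc
  by_contra hnx
  have hx'y : G.Adj x' y := by
    rcases Sym2.mem_iff.1 ha with rfl | rfl <;> rcases Sym2.mem_iff.1 hb with rfl | rfl <;>
      rcases h with h | h
    · exact absurd h.symm hxx
    · exact absurd h.symm hnx
    · exact absurd h.symm hyx
    · exact h
    · exact absurd h.symm hxv
    · exact absurd h hvx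
    · exact absurd h.symm hyv
    · exact absurd h hvy
  exact hC5 ⟨u, x, y, x', v, hux, hxy, hx'y.symm, hvx'.symm, huv.symm, huy, hux', hnx,
    fun h => hvx h.symm, fun h => hvy h.symm, hyu.symm, hxu.symm, hxx, hxv, hyv⟩

theorem aux_arith (D a b c α β : ℤ) (hα : 0 ≤ α) (hβ : 0 ≤ β) (hαa : α ≤ a) (hβb : β ≤ b)
    (hc : 0 ≤ c) (ha : a + c ≤ D) (hb : b + c ≤ D) :
    2 * (1 + a + b + 2 * c) + (a * D + α * (D - β)) + (b * D + β * (D - α)) + c * (2 * (D - 1))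
      ≤ 3 * D ^ 2 + 4 * D + 2 := by
  have h1 : 0 ≤ (D - α) * (D - β) := mul_nonneg (by linarith) (by linarith)
  have h2 : 0 ≤ α * β := mul_nonneg hα hβ
  have h3 : 0 ≤ (D - a - c) * (D + 2) := mul_nonneg (by linarith) (by linarith)
  have h4 : 0 ≤ (D - b - c) * (D + 2) := mul_nonneg (by linarith) (by linarith)
  nlinarith

theorem aux_local [Fintype V] (G : SimpleGraph V) (D : ℕ)
    (hΔ : ∀ v : V, (G.neighborSet v).ncard ≤ D + 1) (hC5 : C5Free G)
    (M : Set (Sym2 V)) (hM : IsInducedMatching G M) (hstab : LSStable G M)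
    (e : Sym2 V) (he : e ∈ M) :
    (CSet G e).ncard + (PCSet G M e).ncard ≤ 3 * D ^ 2 + 4 * D + 2 := by
  induction e using Sym2.ind with
  | _ u v =>
  have huv : G.Adj u v := hM.1 he
  have hne : u ≠ v := huv.ne
  have hdeg : ∀ x, (Finset.univ.filter (fun y => G.Adj x y)).card ≤ D + 1 := by
    intro x
    refine le_trans (le_of_eq ?_) (hΔ x)
    rw [← Set.ncard_coe_finset]
    congr 1
    ext y; simp
  let A : Finset V := Finset.univ.filter (fun x => G.Adj u x ∧ x ≠ v)
  let B : Finset V := Finset.univ.filter (fun x => G.Adj v x ∧ x ≠ u)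
  let W : Finset V := A ∪ B
  let NW : V → Finset V := fun x => Finset.univ.filter (fun y => G.Adj x y ∧ y ∈ W)
  let NO : V → Finset V := fun x => Finset.univ.filter
    (fun y => G.Adj x y ∧ y ∉ W ∧ y ≠ u ∧ y ≠ v)
  let NP : V → Finset V := fun x => (NO x).filter (fun y => s(x, y) ∈ PCSet G M s(u, v))
  let H : SimpleGraph V :=
    { Adj := fun x y => G.Adj x y ∧ x ∈ W ∧ y ∈ W
      symm := ⟨fun x y h => ⟨h.1.symm, h.2.2, h.2.1⟩⟩
      loopless := ⟨fun x h => G.loopless.irrefl x h.1⟩ }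
  have mA : ∀ x, x ∈ A ↔ G.Adj u x ∧ x ≠ v := fun x => by simp [A]
  have mB : ∀ x, x ∈ B ↔ G.Adj v x ∧ x ≠ u := fun x => by simp [B]
  have mW : ∀ x, x ∈ W ↔ x ∈ A ∨ x ∈ B := fun x => by simp [W]
  have mNW : ∀ x y, y ∈ NW x ↔ G.Adj x y ∧ y ∈ W := fun x y => by simp [NW]
  have mNO : ∀ x y, y ∈ NO x ↔ G.Adj x y ∧ y ∉ W ∧ y ≠ u ∧ y ≠ v := fun x y => by simp [NO]
  have mNP : ∀ x y, y ∈ NP x ↔ y ∈ NO x ∧ s(x, y) ∈ PCSet G M s(u, v) :=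
    fun x y => by simp [NP]
  have mH : ∀ x y, H.Adj x y ↔ G.Adj x y ∧ x ∈ W ∧ y ∈ W := fun x y => Iff.rfl
  clear_value NW NO NP H
  have huA : u ∉ A := by simp [mA]
  have huB : u ∉ B := by simp [mB]
  have hvA : v ∉ A := by simp [mA]
  have hvB : v ∉ B := by simp [mB]
  clear_value A B
  have huW : u ∉ W := by simp [mW, huA, huB]
  have hvW : v ∉ W := by simp [mW, hvA, hvB]
  have dA : A.card ≤ D := by
    have : (insert v A).card ≤ D + 1 := by
      refine le_trans (Finset.card_le_card ?_) (hdeg u)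
      intro x hx
      rcases Finset.mem_insert.1 hx with rfl | hx
      · simpa using huv
      · simpa using ((mA x).1 hx).1
    rw [Finset.card_insert_of_notMem hvA] at this
    omega
  have dB : B.card ≤ D := by
    have : (insert u B).card ≤ D + 1 := by
      refine le_trans (Finset.card_le_card ?_) (hdeg v)
      intro x hx
      rcases Finset.mem_insert.1 hx with rfl | hx
      · simpa using huv.symm
      · simpa using ((mB x).1 hx).1
    rw [Finset.card_insert_of_notMem huB] at this
    omega
  have hdisj : ∀ x, Disjoint (NW x) (NO x) := by
    intro x
    rw [Finset.disjoint_left]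
    intro y h1 h2
    exact ((mNO x y).1 h2).2.1 ((mNW x y).1 h1).2
  -- vertex bounds
  have duv : ∀ x, ∀ S : Finset V, (∀ z ∈ S, (z = u ∨ z = v) ∧ G.Adj x z) →
      (NW x).card + (NO x).card + S.card ≤ D + 1 := by
    intro x S hS
    rw [← Finset.card_union_of_disjoint (hdisj x), ← Finset.card_union_of_disjoint]
    · refine le_trans (Finset.card_le_card ?_) (hdeg x)
      intro y hy
      simp only [Finset.mem_union, mNW, mNO] at hy
      simp only [Finset.mem_filter, Finset.mem_univ, true_and]
      rcases hy with (hy | hy) | hy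
      · exact hy.1
      · exact hy.1
      · exact (hS y hy).2
    · rw [Finset.disjoint_left]
      intro y hy hyS
      simp only [Finset.mem_union, mNW, mNO] at hy
      rcases (hS y hyS).1 with rfl | rfl <;> rcases hy with hy | hy
      · exact huW hy.2
      · exact hy.2.2.1 rfl
      · exact hvW hy.2
      · exact hy.2.2.2 rfl
  have hxA : ∀ x ∈ A, (NW x).card + (NO x).card ≤ D := by
    intro x hx
    have := duv x {u} (by simpa using ((mA x).1 hx).1.symm)
    simp at this; omega
  have hxB : ∀ x ∈ B, (NW x).card + (NO x).card ≤ D := by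
    intro x hx
    have := duv x {v} (by simpa using ((mB x).1 hx).1.symm)
    simp at this; omega
  have hxC : ∀ x ∈ A ∩ B, (NW x).card + (NO x).card + 1 ≤ D := by
    intro x hx
    rw [Finset.mem_inter] at hx
    have := duv x {u, v} (by
      simpa using ⟨((mA x).1 hx.1).1.symm, ((mB x).1 hx.2).1.symm⟩)
    rw [Finset.card_pair hne] at this; omega
  have hPO : ∀ x, (NP x).card ≤ (NO x).card := fun x =>
    Finset.card_le_card fun y hy => ((mNP x y).1 hy).1
  let Ap : Finset V := (A \ B).filter (fun x => (NP x).Nonempty)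
  let Bp : Finset V := (B \ A).filter (fun x => (NP x).Nonempty)
  have key : ∀ x ∈ Ap, ∀ x' ∈ Bp, G.Adj x x' := by
    intro x hx x' hx'
    simp only [Ap, Bp, Finset.mem_filter, Finset.mem_sdiff] at hx hx'
    obtain ⟨⟨hxA, hxB⟩, y, hy⟩ := hx
    obtain ⟨⟨hxB', hxA'⟩, y', hy'⟩ := hx'
    rw [mNP, mNO] at hy hy'
    obtain ⟨⟨hxy, hyW, hyu, hyv⟩, hyP⟩ := hy
    have hyA : y ∉ A := fun h => hyW ((mW y).2 (Or.inl h))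
    have hyB : y ∉ B := fun h => hyW ((mW y).2 (Or.inr h))
    have h1 := (mA x).1 hxA
    have h2 := (mB x').1 hxB'
    have h3 : ¬ G.Adj v x := fun h => hxB ((mB x).2 ⟨h, h1.1.ne.symm⟩)
    have h4 : ¬ G.Adj u x' := fun h => hxA' ((mA x').2 ⟨h, h2.1.ne.symm⟩)
    exact aux_adj G hC5 M hM hstab u v he x y x' y' h1.1 h3 h2.1 h4 h1.2 h2.2
      (fun h => hyA ((mA y).2 ⟨h, hyv⟩)) (fun h => hyB ((mB y).2 ⟨h, hyu⟩)) hyu hyv hyP hy'.2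
  have sA : ∑ x ∈ A \ B, (((NW x).card + (NO x).card + (NP x).card : ℕ) : ℤ)
      ≤ (A \ B).card * D + Ap.card * (D - Bp.card) := by
    have : ∀ x ∈ A \ B, (((NW x).card + (NO x).card + (NP x).card : ℕ) : ℤ)
        ≤ D + if (NP x).Nonempty then ((D : ℤ) - Bp.card) else 0 := by
      intro x hx
      have h1 := hxA x (Finset.mem_sdiff.1 hx).1
      split_ifs with h
      · have h2 : Bp.card ≤ (NW x).card := by
          refine Finset.card_le_card fun x' hx' => (mNW x x').2 ⟨?_, ?_⟩
          · exact key x (Finset.mem_filter.2 ⟨hx, h⟩) x' hx'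
          · exact (mW x').2 (Or.inr (Finset.mem_sdiff.1 (Finset.mem_filter.1 hx').1).1)
        have h3 := hPO x
        push_cast; omega
      · rw [Finset.not_nonempty_iff_eq_empty] at h
        rw [h]; simp; omega
    refine (Finset.sum_le_sum this).trans (le_of_eq ?_)
    rw [Finset.sum_add_distrib, ← Finset.sum_filter]
    simp [Ap, mul_sub]
  have sB : ∑ x ∈ B \ A, (((NW x).card + (NO x).card + (NP x).card : ℕ) : ℤ)
      ≤ (B \ A).card * D + Bp.card * (D - Ap.card) := by
    have : ∀ x ∈ B \ A, (((NW x).card + (NO x).card + (NP x).card : ℕ) : ℤ)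
        ≤ D + if (NP x).Nonempty then ((D : ℤ) - Ap.card) else 0 := by
      intro x hx
      have h1 := hxB x (Finset.mem_sdiff.1 hx).1
      split_ifs with h
      · have h2 : Ap.card ≤ (NW x).card := by
          refine Finset.card_le_card fun x' hx' => (mNW x x').2 ⟨?_, ?_⟩
          · exact (key x' hx' x (Finset.mem_filter.2 ⟨hx, h⟩)).symm
          · exact (mW x').2 (Or.inl (Finset.mem_sdiff.1 (Finset.mem_filter.1 hx').1).1)
        have h3 := hPO x
        push_cast; omega
      · rw [Finset.not_nonempty_iff_eq_empty] at h
        rw [h]; simp; omega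
    refine (Finset.sum_le_sum this).trans (le_of_eq ?_)
    rw [Finset.sum_add_distrib, ← Finset.sum_filter]
    simp [Bp, mul_sub]
  have sC : ∑ x ∈ A ∩ B, (((NW x).card + (NO x).card + (NP x).card : ℕ) : ℤ)
      ≤ (A ∩ B).card * (2 * (D - 1)) := by
    rw [← nsmul_eq_mul]
    refine Finset.sum_le_card_nsmul _ _ _ fun x hx => ?_
    have h1 := hxC x hx
    have h3 := hPO x
    push_cast; omega
  have sW : ∑ x ∈ W, (((NW x).card + (NO x).card + (NP x).card : ℕ) : ℤ)
      = ∑ x ∈ A \ B, (((NW x).card + (NO x).card + (NP x).card : ℕ) : ℤ)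
      + ∑ x ∈ B \ A, (((NW x).card + (NO x).card + (NP x).card : ℕ) : ℤ)
      + ∑ x ∈ A ∩ B, (((NW x).card + (NO x).card + (NP x).card : ℕ) : ℤ) := by
    rw [← Finset.sum_union, ← Finset.sum_union]
    · congr 1
      ext x; simp only [W, Finset.mem_union, Finset.mem_sdiff, Finset.mem_inter]; tauto
    · rw [Finset.disjoint_left]; intro x; 
      simp only [Finset.mem_union, Finset.mem_sdiff, Finset.mem_inter]; tauto
    · rw [Finset.disjoint_left]; intro x; 
      simp only [Finset.mem_sdiff]; tauto
  -- edges
  let T1 : Finset (Sym2 V) :=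
    insert s(u, v) (A.image (fun x => s(u, x)) ∪ B.image (fun x => s(v, x)))
  let T2 : Finset (Sym2 V) := H.edgeFinset
  let T3 : Finset (Sym2 V) := W.biUnion fun x => (NO x).image (fun y => s(x, y))
  let T4 : Finset (Sym2 V) := W.biUnion fun x => (NP x).image (fun y => s(x, y))
  have c1 : T1.card ≤ 1 + A.card + B.card := by
    refine (Finset.card_insert_le _ _).trans ?_
    have h := Finset.card_union_le (A.image (fun x => s(u, x))) (B.image (fun x => s(v, x)))
    have h1 := Finset.card_image_le (s := A) (f := fun x => s(u, x))
    have h2 := Finset.card_image_le (s := B) (f := fun x => s(v, x))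
    omega
  have c2 : 2 * T2.card = ∑ x ∈ W, (NW x).card := by
    rw [← H.sum_degrees_eq_twice_card_edges, ← Finset.sum_subset (Finset.subset_univ W)]
    · refine Finset.sum_congr rfl fun x hx => ?_
      rw [← SimpleGraph.card_neighborFinset_eq_degree]
      congr 1
      ext y; simp [mH, mNW, hx]
    · intro x _ hx
      rw [← SimpleGraph.card_neighborFinset_eq_degree, Finset.card_eq_zero]
      ext y; simp [mH, hx]
  have c3 : T3.card ≤ ∑ x ∈ W, (NO x).card :=
    Finset.card_biUnion_le.trans (Finset.sum_le_sum fun x _ => Finset.card_image_le)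
  have c4 : T4.card ≤ ∑ x ∈ W, (NP x).card :=
    Finset.card_biUnion_le.trans (Finset.sum_le_sum fun x _ => Finset.card_image_le)
  have cover0 : ∀ x y, G.Adj x y → (x = u ∨ x = v ∨ x ∈ W) →
      s(x, y) ∈ T1 ∨ s(x, y) ∈ T2 ∨ (∃ a ∈ W, ∃ b ∈ NO a, s(a, b) = s(x, y)) := by
    have hu : ∀ y, G.Adj u y → s(u, y) ∈ T1 := by
      intro y h
      by_cases hy : y = v
      · simp [T1, hy]
      · exact Finset.mem_insert_of_mem (Finset.mem_union_left _
          (Finset.mem_image.2 ⟨y, (mA y).2 ⟨h, hy⟩, rfl⟩))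
    have hv : ∀ y, G.Adj v y → s(v, y) ∈ T1 := by
      intro y h
      by_cases hy : y = u
      · subst hy; rw [Sym2.eq_swap]; simp [T1]
      · exact Finset.mem_insert_of_mem (Finset.mem_union_right _
          (Finset.mem_image.2 ⟨y, (mB y).2 ⟨h, hy⟩, rfl⟩))
    intro x y hxy hx
    rcases hx with rfl | rfl | hx
    · exact Or.inl (hu y hxy)
    · exact Or.inl (hv y hxy)
    · by_cases hyu : y = u
      · subst hyu; left; rw [Sym2.eq_swap]; exact hu x hxy.symm
      by_cases hyv : y = v
      · subst hyv; left; rw [Sym2.eq_swap]; exact hv x hxy.symm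
      by_cases hyW : y ∈ W
      · right; left
        simp only [T2, SimpleGraph.mem_edgeFinset, SimpleGraph.mem_edgeSet]
        exact (mH x y).2 ⟨hxy, hx, hyW⟩
      · right; right
        exact ⟨x, hx, y, (mNO x y).2 ⟨hxy, hyW, hyu, hyv⟩, rfl⟩
  have cover : ∀ f ∈ CSet G s(u, v),
      f ∈ T1 ∨ f ∈ T2 ∨ (∃ a ∈ W, ∃ b ∈ NO a, s(a, b) = f) := by
    intro f hf
    obtain ⟨hf, a, ha, b, hb, h⟩ := hf
    obtain ⟨c, rfl⟩ := hb
    refine cover0 b c hf ?_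
    by_cases hbu : b = u
    · exact Or.inl hbu
    by_cases hbv : b = v
    · exact Or.inr (Or.inl hbv)
    right; right
    rw [mW, mA, mB]
    rcases Sym2.mem_iff.1 ha with rfl | rfl <;> rcases h with h | h
    · exact absurd h.symm hbu
    · exact Or.inl ⟨h, hbv⟩
    · exact absurd h.symm hbv
    · exact Or.inr ⟨h, hbu⟩
  have e1 : (CSet G s(u, v)).ncard ≤ T1.card + T2.card + T3.card := by
    have : CSet G s(u, v) ⊆ ((T1 ∪ T2 ∪ T3 : Finset (Sym2 V)) : Set (Sym2 V)) := by
      intro f hf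
      rw [Finset.mem_coe, Finset.mem_union, Finset.mem_union]
      rcases cover f hf with h | h | ⟨a, ha, b, hb, rfl⟩
      · exact Or.inl (Or.inl h)
      · exact Or.inl (Or.inr h)
      · exact Or.inr (Finset.mem_biUnion.2 ⟨a, ha, Finset.mem_image.2 ⟨b, hb, rfl⟩⟩)
    have h := Set.ncard_le_ncard this (Finset.finite_toSet _)
    rw [Set.ncard_coe_finset] at h
    have h1 := Finset.card_union_le (T1 ∪ T2) T3
    have h2 := Finset.card_union_le T1 T2
    omega
  have e2 : (PCSet G M s(u, v)).ncard ≤ T1.card + T2.card + T4.card := by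
    have : PCSet G M s(u, v) ⊆ ((T1 ∪ T2 ∪ T4 : Finset (Sym2 V)) : Set (Sym2 V)) := by
      intro f hf
      rw [Finset.mem_coe, Finset.mem_union, Finset.mem_union]
      rcases cover f hf.1 with h | h | ⟨a, ha, b, hb, rfl⟩
      · exact Or.inl (Or.inl h)
      · exact Or.inl (Or.inr h)
      · exact Or.inr (Finset.mem_biUnion.2 ⟨a, ha, Finset.mem_image.2
          ⟨b, (mNP a b).2 ⟨hb, hf⟩, rfl⟩⟩)
    have h := Set.ncard_le_ncard this (Finset.finite_toSet _)
    rw [Set.ncard_coe_finset] at h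
    have h1 := Finset.card_union_le (T1 ∪ T2) T4
    have h2 := Finset.card_union_le T1 T2
    omega
  have tot : (CSet G s(u, v)).ncard + (PCSet G M s(u, v)).ncard ≤
      2 * (1 + A.card + B.card) + ∑ x ∈ W, ((NW x).card + (NO x).card + (NP x).card) := by
    rw [Finset.sum_add_distrib, Finset.sum_add_distrib]
    omega
  have kA : (A \ B).card + (A ∩ B).card = A.card := Finset.card_sdiff_add_card_inter A B
  have kB : (B \ A).card + (A ∩ B).card = B.card := by
    rw [Finset.inter_comm]; exact Finset.card_sdiff_add_card_inter B A
  have kAp : Ap.card ≤ (A \ B).card := Finset.card_filter_le _ _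
  have kBp : Bp.card ≤ (B \ A).card := Finset.card_filter_le _ _
  have fin := aux_arith D (A \ B).card (B \ A).card (A ∩ B).card Ap.card Bp.card
    (by positivity) (by positivity) (by exact_mod_cast kAp) (by exact_mod_cast kBp)
    (by positivity) (by omega) (by omega)
  zify at tot kA kB ⊢
  push_cast at sW sA sB sC
  linarith

theorem aux_exists (G : SimpleGraph V) (M : Set (Sym2 V))
    (hmax : IsMaximalInducedMatching G M) (f : Sym2 V) (hf : f ∈ G.edgeSet) :
    ∃ e ∈ M, Conflict G e f := by
  by_contra! hcon
  have h : insert f M = M := by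
    refine hmax.2 _ ⟨?_, ?_⟩ (Set.subset_insert _ _)
    · exact Set.insert_subset hf hmax.1.1
    · rintro a (rfl | ha) b (rfl | hb) hab
      · exact absurd rfl hab
      · exact fun hc => hcon b hb (aux_symm G _ _ hc)
      · exact hcon a ha
      · exact hmax.1.2 a ha b hb hab
  have hfM : f ∈ M := h ▸ Set.mem_insert f M
  exact hcon f hfM ⟨f.out.1, Sym2.out_fst_mem f, f.out.1, Sym2.out_fst_mem f, Or.inl rfl⟩

theorem aux_count [Fintype V] (G : SimpleGraph V) (M : Set (Sym2 V))
    (hmax : IsMaximalInducedMatching G M) (K : ℕ)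
    (hK : ∀ e ∈ M, (CSet G e).ncard + (PCSet G M e).ncard ≤ K) :
    2 * G.edgeSet.ncard ≤ M.ncard * K := by
  let E : Finset (Sym2 V) := Finset.univ.filter (· ∈ G.edgeSet)
  let N : Finset (Sym2 V) := Finset.univ.filter (· ∈ M)
  have hE : G.edgeSet.ncard = E.card := by
    rw [← Set.ncard_coe_finset]; congr 1; ext; simp [E]
  have hN : M.ncard = N.card := by
    rw [← Set.ncard_coe_finset]; congr 1; ext; simp [N]
  have hC : ∀ e, (CSet G e).ncard = ∑ f ∈ E, if f ∈ CSet G e then 1 else 0 := by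
    intro e
    rw [← Finset.card_filter, ← Set.ncard_coe_finset]; congr 1; ext f
    simp only [E, Finset.coe_filter, Finset.mem_filter, Finset.mem_univ, true_and,
      Set.mem_ofPred_eq]
    exact ⟨fun h => ⟨h.1, h⟩, fun h => h.2⟩
  have hP : ∀ e, (PCSet G M e).ncard = ∑ f ∈ E, if f ∈ PCSet G M e then 1 else 0 := by
    intro e
    rw [← Finset.card_filter, ← Set.ncard_coe_finset]; congr 1; ext f
    simp only [E, Finset.coe_filter, Finset.mem_filter, Finset.mem_univ, true_and,
      Set.mem_ofPred_eq]
    exact ⟨fun h => ⟨h.1.1, h⟩, fun h => h.2⟩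
  rw [hE, hN]
  have hN' : ∀ e, e ∈ N ↔ e ∈ M := fun e => by simp [N]
  calc 2 * E.card = ∑ f ∈ E, 2 := by simp [mul_comm]
    _ ≤ ∑ f ∈ E, ∑ e ∈ N, ((if f ∈ CSet G e then 1 else 0) +
          (if f ∈ PCSet G M e then 1 else 0)) := by
        refine Finset.sum_le_sum fun f hf => ?_
        have hf : f ∈ G.edgeSet := by simpa [E] using hf
        obtain ⟨e, he, hc⟩ := aux_exists G M hmax f hf
        have hfe : f ∈ CSet G e := ⟨hf, hc⟩
        by_cases hp : f ∈ PCSet G M e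
        · refine le_trans ?_ (Finset.single_le_sum (fun _ _ => Nat.zero_le _) ((hN' e).2 he))
          simp [hfe, hp]
        · rw [aux_mem_PC] at hp
          push Not at hp
          obtain ⟨g, hg, hge, hgc⟩ := hp hf hc
          have hfg : f ∈ CSet G g := ⟨hf, hgc⟩
          refine le_trans ?_ (Finset.sum_le_sum_of_subset (s := {g, e}) ?_)
          · rw [Finset.sum_pair hge]
            simp only [hfe, hfg, if_true]; omega
          · intro z hz
            rcases Finset.mem_insert.1 hz with rfl | hz
            · exact (hN' _).2 hg
            · rw [Finset.mem_singleton.1 hz]; exact (hN' _).2 he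
    _ = ∑ e ∈ N, ((CSet G e).ncard + (PCSet G M e).ncard) := by
        rw [Finset.sum_comm]
        refine Finset.sum_congr rfl fun e _ => ?_
        rw [Finset.sum_add_distrib, hC, hP]
    _ ≤ N.card * K := by
        rw [← smul_eq_mul]
        exact Finset.sum_le_card_nsmul _ _ _ fun e he => hK e ((hN' e).1 he)

/-- lower bound for locally optimal induced matchings in `C₅`-free graphs. -/
theorem stmt10 [Fintype V] (G : SimpleGraph V) (d : ℕ) (hd : 3 ≤ d)
    (hΔ : ∀ v : V, (G.neighborSet v).ncard ≤ d) (hC5 : C5Free G)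
    (M : Set (Sym2 V)) (hmax : IsMaximalInducedMatching G M) (hstab : LSStable G M) :
    (M.ncard : ℝ) ≥
      (G.edgeSet.ncard : ℝ) / ((3 / 2) * (d : ℝ) ^ 2 - (d : ℝ) + 1 / 2) := by
  obtain ⟨D, rfl⟩ : ∃ D, d = D + 1 := ⟨d - 1, by omega⟩
  have h := aux_count G M hmax _ (fun e he => aux_local G D hΔ hC5 M hmax.1 hstab e he)
  have h' : (2 : ℝ) * G.edgeSet.ncard ≤ M.ncard * (3 * (D : ℝ) ^ 2 + 4 * D + 2) := by
    exact_mod_cast h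
  have hD : (0 : ℝ) ≤ D := Nat.cast_nonneg D
  have e1 : (3 / 2) * ((D + 1 : ℕ) : ℝ) ^ 2 - ((D + 1 : ℕ) : ℝ) + 1 / 2
      = (3 * (D : ℝ) ^ 2 + 4 * D + 2) / 2 := by push_cast; ring
  rw [ge_iff_le, e1, div_le_iff₀ (by positivity)]
  linarith
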